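/- arXiv:1812.06027 — 2 statements merged into one kernel-verified Lean document; each statement's English description precedes it below -/
import Mathlib

section
/- Let E be a finite-dimensional real vector space, w : E → E a C^∞ vector field with w(z) = 0 at a point z ∈ E, and ε ∈ {1, −1}. Suppose there exists a (Euclidean) inner product ⟨·,·⟩ on E such that the bilinear form (u, u') ↦ ⟨ε·Dw(z)u, u'⟩ is negative definite, where Dw(z) is the derivative of w at z. Then every neighborhood of z contains an open neighborhood U of z with the following property: whenever x : (a₋, a₊) → E is a maximal integral curve of w (with −∞ ≤ a₋ < a₊ ≤ ∞) and t' ∈ (a₋, a₊) satisfies x(t') ∈ U, then a₊ = ∞ if ε = 1 (respectively a₋ = −∞ if ε = −1), and x(t) ∈ U for every t in the domain with ε·(t − t') ≥ 0. -/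
open Set Filter Topology Metric

/-- A positive definite bilinear form in finite dimension is coercive. -/
theorem aux_coercive {E : Type*} [NormedAddCommGroup E] [NormedSpace ℝ E]
    [FiniteDimensional ℝ E] (L : E →L[ℝ] E →L[ℝ] ℝ) (hL : ∀ u, u ≠ 0 → 0 < L u u) :
    ∃ c > 0, ∀ u, c * ‖u‖ ^ 2 ≤ L u u := by
  have : ProperSpace E := FiniteDimensional.proper ℝ E
  obtain ⟨c, hc, h⟩ := (isCompact_sphere (0 : E) 1).exists_forall_le' (f := fun u => L u u)
    (by fun_prop) (a := 0) (fun u hu => hL u (by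
      rintro rfl
      simp at hu))
  refine ⟨c, hc, fun u => ?_⟩
  by_cases hu : u = 0
  · simp [hu]
  have hn : 0 < ‖u‖ := norm_pos_iff.2 hu
  have h1 := h (‖u‖⁻¹ • u) (by simp [norm_smul, hn.ne'])
  simp only [map_smul, smul_apply, smul_eq_mul] at h1
  have h2 : c * ‖u‖ ^ 2 ≤ (‖u‖⁻¹ * (‖u‖⁻¹ * L u u)) * ‖u‖ ^ 2 := by gcongr
  convert h2 using 1
  field_simp

/-- Near `z` the field points strictly inward. -/
theorem aux_inward {E : Type*} [NormedAddCommGroup E] [NormedSpace ℝ E]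
    [FiniteDimensional ℝ E] (L : E →L[ℝ] E →L[ℝ] ℝ) (w : E → E) (z : E) (A : E →L[ℝ] E)
    (hw : HasFDerivAt w A z) (hz : w z = 0) (hneg : ∀ u, u ≠ 0 → L (A u) u < 0) :
    ∀ᶠ y in 𝓝 z, y ≠ z → L (w y) (y - z) < 0 := by
  obtain ⟨k, hk, h⟩ := aux_coercive (-(L.comp A)) (fun u hu => by
    simpa using hneg u hu)
  have h1 := hw.isLittleO.def (c := k / (2 * (‖L‖ + 1))) (by positivity)
  filter_upwards [h1] with y hy hyz
  have hn : 0 < ‖y - z‖ := norm_pos_iff.2 (sub_ne_zero.2 hyz)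
  have h2 := h (y - z)
  simp only [neg_apply, ContinuousLinearMap.comp_apply] at h2
  rw [hz, sub_zero] at hy
  have h3 : L (w y) (y - z) = L (A (y - z)) (y - z) + L (w y - A (y - z)) (y - z) := by
    simp
  have h4 : L (w y - A (y - z)) (y - z) ≤ ‖L‖ * ‖w y - A (y - z)‖ * ‖y - z‖ :=
    (le_abs_self _).trans (L.le_opNorm₂ _ _)
  have h5 : ‖L‖ * ‖w y - A (y - z)‖ * ‖y - z‖
      ≤ (‖L‖ + 1) * (k / (2 * (‖L‖ + 1)) * ‖y - z‖) * ‖y - z‖ := by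
    gcongr
    linarith
  have h6 : (‖L‖ + 1) * (k / (2 * (‖L‖ + 1)) * ‖y - z‖) * ‖y - z‖ = k / 2 * ‖y - z‖ ^ 2 := by
    have : ‖L‖ + 1 ≠ 0 := by positivity
    field_simp
  have h7 : 0 < k * ‖y - z‖ ^ 2 := by positivity
  linarith

/-- Forward uniqueness for a `C¹` autonomous field. -/
theorem aux_unique {E : Type*} [NormedAddCommGroup E] [NormedSpace ℝ E]
    [FiniteDimensional ℝ E] (w : E → E) (hw : ContDiff ℝ 1 w) (f g : ℝ → E) (s T : ℝ)
    (hf : ∀ t ∈ Icc s T, HasDerivAt f (w (f t)) t)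
    (hg : ∀ t ∈ Icc s T, HasDerivAt g (w (g t)) t) (h0 : f s = g s) :
    EqOn f g (Icc s T) := by
  have : ProperSpace E := FiniteDimensional.proper ℝ E
  have hfc : ContinuousOn f (Icc s T) := fun t ht => (hf t ht).continuousAt.continuousWithinAt
  have hgc : ContinuousOn g (Icc s T) := fun t ht => (hg t ht).continuousAt.continuousWithinAt
  have hb := ((isCompact_Icc.image_of_continuousOn hfc).union
    (isCompact_Icc.image_of_continuousOn hgc)).isBounded
  obtain ⟨R, hR⟩ := hb.subset_closedBall (0 : E)
  obtain ⟨C, hC⟩ := (isCompact_closedBall (0 : E) R).exists_bound_of_continuousOn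
    (f := fderiv ℝ w) (hw.continuous_fderiv one_ne_zero).continuousOn
  have hlip : LipschitzOnWith C.toNNReal w (closedBall (0 : E) R) :=
    (convex_closedBall (0 : E) R).lipschitzOnWith_of_nnnorm_fderiv_le
      (fun x _ => hw.differentiable one_ne_zero x) (fun x hx => by
        rw [← NNReal.coe_le_coe]
        exact (hC x hx).trans (Real.le_coe_toNNReal C))
  refine ODE_solution_unique_of_mem_Icc_right (v := fun _ => w) (s := fun _ => closedBall 0 R)
    (fun _ _ => hlip) hfc (fun t ht => (hf t (Ico_subset_Icc_self ht)).hasDerivWithinAt) ?_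
    hgc (fun t ht => (hg t (Ico_subset_Icc_self ht)).hasDerivWithinAt) ?_ h0
  · exact fun t ht => hR (Or.inl ⟨t, Ico_subset_Icc_self ht, rfl⟩)
  · exact fun t ht => hR (Or.inr ⟨t, Ico_subset_Icc_self ht, rfl⟩)

/-- A maximal integral curve staying in a compact set in forward time is defined for all
forward time. -/
theorem aux_extend {E : Type*} [NormedAddCommGroup E] [NormedSpace ℝ E]
    [FiniteDimensional ℝ E] (w : E → E) (hw : ContDiff ℝ 1 w) (K : Set E) (hK : IsCompact K)
    (a b : EReal) (x : ℝ → E)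
    (hx : ∀ t : ℝ, a < (t : EReal) → (t : EReal) < b → HasDerivAt x (w (x t)) t)
    (hmax : ∀ (a' b' : EReal) (y : ℝ → E), a' ≤ a → b ≤ b' →
          (∀ t : ℝ, a' < (t : EReal) → (t : EReal) < b' → HasDerivAt y (w (y t)) t) →
          (∀ t : ℝ, a < (t : EReal) → (t : EReal) < b → y t = x t) →
          a' = a ∧ b' = b)
    (t' : ℝ) (ha : a < (t' : EReal)) (hb : (t' : EReal) < b)
    (hin : ∀ t : ℝ, t' ≤ t → (t : EReal) < b → x t ∈ K) : b = ⊤ := by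
  induction b with
  | bot => simp at hb
  | top => rfl
  | coe β =>
  exfalso
  rw [EReal.coe_lt_coe_iff] at hb
  have hat : ∀ {t : ℝ}, t' ≤ t → a < (t : EReal) := fun h =>
    ha.trans_le (EReal.coe_le_coe_iff.2 h)
  obtain ⟨p, -, hp⟩ := hK.exists_mapClusterPt (f := 𝓝[<] β) (u := x) (by
    rw [le_principal_iff, mem_map]
    filter_upwards [Ioo_mem_nhdsLT hb] with t ht
    exact hin t ht.1.le (EReal.coe_lt_coe_iff.2 ht.2))
  obtain ⟨r, hr, e, he, H⟩ :=
    hw.contDiffAt (x := p).exists_forall_mem_closedBall_exists_eq_forall_mem_Ioo_hasDerivAt 0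
  have hfr := hp.frequently (closedBall_mem_nhds p hr)
  obtain ⟨s, hsr, hs⟩ := (hfr.and_eventually
    (Ioo_mem_nhdsLT (show max t' (β - e) < β from max_lt hb (by linarith)))).exists
  obtain ⟨α, hα0, hα⟩ := H (x s) hsr
  have hs1 : t' < s := (le_max_left _ _).trans_lt hs.1
  have hs2 : β < s + e := by
    have := (le_max_right t' (β - e)).trans_lt hs.1
    linarith
  have hs3 : s < β := hs.2
  -- translate the local solution
  set γ : ℝ → E := fun t => α (t - s) with hγdef
  have hγ : ∀ t, s - e < t → t < s + e → HasDerivAt γ (w (γ t)) t := fun t h1 h2 =>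
    (hα (t - s) ⟨by linarith, by linarith⟩).comp_sub_const t s
  have hγs : γ s = x s := by simp [hγdef, hα0]
  have heq : ∀ t, s ≤ t → t < β → x t = γ t := fun t h1 h2 =>
    aux_unique w hw x γ s t
      (fun u hu => hx u (hat (hs1.le.trans hu.1)) (EReal.coe_lt_coe_iff.2 (hu.2.trans_lt h2)))
      (fun u hu => hγ u (by linarith [hu.1]) (by linarith [hu.2])) hγs.symm ⟨h1, le_rfl⟩
  have hfin := (hmax a ((s + e : ℝ) : EReal) (fun t => if t < β then x t else γ t) le_rfl
    (EReal.coe_le_coe_iff.2 hs2.le) ?_ ?_).2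
  · rw [EReal.coe_eq_coe_iff] at hfin
    linarith
  · intro t h1 h2
    rw [EReal.coe_lt_coe_iff] at h2
    by_cases htβ : t < β
    · have : (fun t => if t < β then x t else γ t) =ᶠ[𝓝 t] x := by
        filter_upwards [Iio_mem_nhds htβ] with u hu
        exact if_pos hu
      simp only [htβ, if_true]
      exact (hx t h1 (EReal.coe_lt_coe_iff.2 htβ)).congr_of_eventuallyEq this
    · have hst : s < t := hs3.trans_le (not_lt.1 htβ)
      have : (fun t => if t < β then x t else γ t) =ᶠ[𝓝 t] γ := by
        filter_upwards [Ioi_mem_nhds hst] with u hu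
        by_cases huβ : u < β
        · simp only [huβ, if_true]
          exact heq u (le_of_lt hu) huβ
        · simp only [huβ, if_false]
      simp only [htβ, if_false]
      exact (hγ t (by linarith) h2).congr_of_eventuallyEq this
  · intro t _ h2
    exact if_pos (EReal.coe_lt_coe_iff.1 h2)

/-- The forward (`ε = 1`) case. -/
theorem aux_forward {E : Type*} [NormedAddCommGroup E] [NormedSpace ℝ E]
    [FiniteDimensional ℝ E] (w : E → E) (hw : ContDiff ℝ 1 w) (z : E) (hz : w z = 0)
    (L : E →L[ℝ] E →L[ℝ] ℝ) (hsymm : ∀ u u', L u u' = L u' u)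
    (hpos : ∀ u, u ≠ 0 → 0 < L u u)
    (hneg : ∀ u, u ≠ 0 → L (fderiv ℝ w z u) u < 0) :
    ∀ V ∈ 𝓝 z, ∃ U : Set E, U ⊆ V ∧ IsOpen U ∧ z ∈ U ∧
      ∀ (a b : EReal) (x : ℝ → E),
        (∀ t : ℝ, a < (t : EReal) → (t : EReal) < b → HasDerivAt x (w (x t)) t) →
        (∀ (a' b' : EReal) (y : ℝ → E), a' ≤ a → b ≤ b' →
          (∀ t : ℝ, a' < (t : EReal) → (t : EReal) < b' → HasDerivAt y (w (y t)) t) →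
          (∀ t : ℝ, a < (t : EReal) → (t : EReal) < b → y t = x t) →
          a' = a ∧ b' = b) →
        ∀ t' : ℝ, a < (t' : EReal) → (t' : EReal) < b → x t' ∈ U →
          b = ⊤ ∧ ∀ t : ℝ, (t : EReal) < b → t' ≤ t → x t ∈ U := by
  intro V hV
  have : ProperSpace E := FiniteDimensional.proper ℝ E
  obtain ⟨c, hc, hcoer⟩ := aux_coercive L hpos
  obtain ⟨d, hd, hball⟩ := Metric.mem_nhds_iff.1 (inter_mem hV
    (aux_inward L w z _ (hw.differentiable one_ne_zero z).hasFDerivAt hz hneg))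
  have hsub : ∀ y, L (y - z) (y - z) < c * d ^ 2 → y ∈ ball z d := fun y hy => by
    have h1 := (hcoer (y - z)).trans_lt hy
    have h2 := lt_of_mul_lt_mul_left h1 hc.le
    rw [mem_ball, dist_eq_norm]
    exact lt_of_pow_lt_pow_left₀ 2 hd.le h2
  have hcont : Continuous fun y : E => L (y - z) (y - z) := by fun_prop
  refine ⟨{y | L (y - z) (y - z) < c * d ^ 2}, fun y hy => (hball (hsub y hy)).1,
    isOpen_lt hcont continuous_const, ?_, ?_⟩
  · simp only [mem_ofPred_eq, sub_self, map_zero]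
    positivity
  intro a b x hx hmax t' ha hb ht'
  simp only [mem_ofPred_eq] at ht' ⊢
  set q := (L (x t' - z) (x t' - z) + c * d ^ 2) / 2 with hq
  have hnn : 0 ≤ L (x t' - z) (x t' - z) := le_trans (by positivity) (hcoer (x t' - z))
  have hcd : 0 < c * d ^ 2 := by positivity
  have hkey : ∀ t : ℝ, t' ≤ t → (t : EReal) < b → L (x t - z) (x t - z) ≤ q := by
    intro t h1 h2
    have hder : ∀ u ∈ Icc t' t, HasDerivAt (fun u => L (x u - z) (x u - z))
        (2 * L (w (x u)) (x u - z)) u := fun u hu => by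
      have hxu := (hx u (ha.trans_le (EReal.coe_le_coe_iff.2 hu.1))
        ((EReal.coe_le_coe_iff.2 hu.2).trans_lt h2)).sub_const z
      have := L.hasDerivAt_of_bilinear (fun _ => hxu) (fun _ => hxu)
      rw [hsymm (x u - z) (w (x u)), ← two_mul] at this
      exact this
    refine image_le_of_deriv_right_lt_deriv_boundary (B := fun _ => q) (B' := fun _ => 0)
      (fun u hu => (hder u hu).continuousAt.continuousWithinAt)
      (fun u hu => (hder u (Ico_subset_Icc_self hu)).hasDerivWithinAt)
      (by simp only [hq]; linarith) (fun u => hasDerivAt_const u q) ?_ ⟨h1, le_rfl⟩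
    intro u hu huq
    have hm : x u ∈ ball z d := hsub _ (by rw [huq]; simp only [hq]; linarith)
    have hne : x u ≠ z := by
      intro h
      rw [h] at huq
      simp only [sub_self, map_zero, hq] at huq
      linarith
    have := (hball hm).2 hne
    linarith
  have hqlt : q < c * d ^ 2 := by simp only [hq]; linarith
  refine ⟨?_, fun t h1 h2 => (hkey t h2 h1).trans_lt hqlt⟩
  have hKc : IsCompact {y : E | L (y - z) (y - z) ≤ q} :=
    Metric.isCompact_of_isClosed_isBounded (isClosed_le hcont continuous_const)
      (isBounded_ball.subset (fun y hy => hsub y (lt_of_le_of_lt hy hqlt)))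
  exact aux_extend w hw _ hKc a b x hx hmax t' ha hb hkey


/-- If `w` is a smooth vector field with `w z = 0` and, for some
sign `ε` and some Euclidean inner product `B` on `E`, the bilinear form
`(u, u') ↦ B (ε • Dw(z) u) u'` is negative definite, then arbitrarily small
open neighborhoods `U` of `z` trap, forward (if `ε = 1`) or backward (if
`ε = -1`) in time, every maximal integral curve of `w` that meets `U`. -/
theorem stmt_3 {E : Type*} [NormedAddCommGroup E] [NormedSpace ℝ E]
    [FiniteDimensional ℝ E]
    (w : E → E) (hw : ContDiff ℝ (⊤ : ℕ∞) w) (z : E) (hz : w z = 0)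
    (ε : ℝ) (hε : ε = 1 ∨ ε = -1)
    (B : E →ₗ[ℝ] E →ₗ[ℝ] ℝ)
    (hBsymm : ∀ u u' : E, B u u' = B u' u)
    (hBpos : ∀ u : E, u ≠ 0 → 0 < B u u)
    (hneg : ∀ u : E, u ≠ 0 → B (ε • fderiv ℝ w z u) u < 0) :
    ∀ V ∈ nhds z, ∃ U : Set E, U ⊆ V ∧ IsOpen U ∧ z ∈ U ∧
      ∀ (a b : EReal) (x : ℝ → E), a < b →
        (∀ t : ℝ, a < (t : EReal) → (t : EReal) < b → HasDerivAt x (w (x t)) t) →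
        (∀ (a' b' : EReal) (y : ℝ → E), a' ≤ a → b ≤ b' →
          (∀ t : ℝ, a' < (t : EReal) → (t : EReal) < b' → HasDerivAt y (w (y t)) t) →
          (∀ t : ℝ, a < (t : EReal) → (t : EReal) < b → y t = x t) →
          a' = a ∧ b' = b) →
        ∀ t' : ℝ, a < (t' : EReal) → (t' : EReal) < b → x t' ∈ U →
          (ε = 1 → b = ⊤) ∧ (ε = -1 → a = ⊥) ∧
          ∀ t : ℝ, a < (t : EReal) → (t : EReal) < b → 0 ≤ ε * (t - t') → x t ∈ U := by
  intro V hV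
  have hw1 : ContDiff ℝ 1 w := hw.of_le (by exact_mod_cast le_top)
  rcases hε with rfl | rfl
  · obtain ⟨U, hUV, hUo, hzU, H⟩ := aux_forward w hw1 z hz B.toContinuousBilinearMap
      (fun u u' => hBsymm u u') (fun u hu => hBpos u hu)
      (fun u hu => by simpa using hneg u hu) V hV
    refine ⟨U, hUV, hUo, hzU, fun a b x _ hx hmax t' ha hb ht' => ?_⟩
    obtain ⟨h1, h2⟩ := H a b x hx hmax t' ha hb ht'
    exact ⟨fun _ => h1, fun h => by norm_num at h, fun t _ h4 h5 => h2 t h4 (by linarith)⟩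
  · obtain ⟨U, hUV, hUo, hzU, H⟩ := aux_forward (fun y => - w y) hw1.neg z (by simp [hz])
      B.toContinuousBilinearMap
      (fun u u' => hBsymm u u') (fun u hu => hBpos u hu)
      (fun u hu => by
        have h := hneg u hu
        rw [fderiv_fun_neg]
        simpa using h) V hV
    refine ⟨U, hUV, hUo, hzU, fun a b x _ hx hmax t' ha hb ht' => ?_⟩
    have hrev : ∀ (a b : EReal) (x : ℝ → E) (v : E → E),
        (∀ t : ℝ, a < (t : EReal) → (t : EReal) < b → HasDerivAt x (v (x t)) t) →
        ∀ t : ℝ, -b < (t : EReal) → (t : EReal) < -a →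
          HasDerivAt (fun t => x (-t)) (-(v (x (-t)))) t := by
      intro a b x v hx t h1 h2
      have h := hx (-t) (by rw [EReal.coe_neg]; exact EReal.lt_neg_comm.1 h2)
        (by rw [EReal.coe_neg]; exact EReal.neg_lt_comm.1 h1)
      simpa [Function.comp_def] using h.scomp t (hasDerivAt_neg t)
    obtain ⟨h1, h2⟩ := H (-b) (-a) (fun t => x (-t)) (hrev a b x w hx) (by
      intro a' b' y ha' hb' hy hyx
      have hy' := hrev a' b' y (fun y => - w y) hy
      simp only [neg_neg] at hy'
      have := hmax (-b') (-a') (fun t => y (-t)) (EReal.neg_le_of_neg_le hb')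
        (EReal.le_neg_of_le_neg ha') hy' (by
          intro t h1 h2
          have := hyx (-t) (by rw [EReal.coe_neg]; exact EReal.neg_lt_neg_iff.2 h2)
            (by rw [EReal.coe_neg]; exact EReal.neg_lt_neg_iff.2 h1)
          simpa using this)
      exact ⟨by rw [← this.2, neg_neg], by rw [← this.1, neg_neg]⟩) (-t')
      (by rw [EReal.coe_neg]; exact EReal.neg_lt_neg_iff.2 hb)
      (by rw [EReal.coe_neg]; exact EReal.neg_lt_neg_iff.2 ha) (by simpa using ht')
    refine ⟨fun h => by norm_num at h, fun _ => by simpa using h1, fun t h3 _ h5 => ?_⟩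
    have := h2 (-t) (by rw [EReal.coe_neg]; exact EReal.neg_lt_neg_iff.2 h3) (by linarith)
    simpa using this
end

section
/- Let m ≥ 2 and write 𝟙 = (1, …, 1) ∈ ℝ^m. For every ξ ∈ ℝ and ζ > 0 there is a neighborhood W of (ξ·𝟙, −ζ·𝟙) in ℝ^m × ℝ^m such that every maximal solution y of the system (hcu) with (y(0), y'(0)) ∈ W is defined on all of ℝ; moreover, for each such solution there exist δ > 0 and T > 0 such that y_j(t) < −δ for all t ≥ T and all j, and y_j(t) > δ for all t ≤ −T and all j. -/
theorem hasDerivAt_sqp (x : ℝ) : HasDerivAt (fun u : ℝ => (max u 0)^2) (2 * max x 0) x := by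
  rcases lt_trichotomy x 0 with h | h | h
  · rw [max_eq_right h.le, mul_zero]
    refine (hasDerivAt_const x (0:ℝ)).congr_of_eventuallyEq ?_
    filter_upwards [Iio_mem_nhds h] with u hu
    simp [max_eq_right (le_of_lt (by simpa using hu))]
  · subst h
    simp only [max_self, mul_zero]
    rw [hasDerivAt_iff_isLittleO]
    simp only [sub_zero, smul_zero, max_self, ne_eq, OfNat.ofNat_ne_zero, not_false_eq_true, zero_pow]
    rw [Asymptotics.isLittleO_iff]
    intro c hc
    filter_upwards [Metric.ball_mem_nhds (0:ℝ) hc] with u hu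
    rw [mem_ball_zero_iff] at hu
    simp only [Real.norm_eq_abs] at *
    rw [abs_of_nonneg (sq_nonneg _)]
    have h1 : max u 0 ≤ |u| := max_le (le_abs_self u) (abs_nonneg u)
    have h2 : 0 ≤ max u 0 := le_max_right _ _
    nlinarith
  · rw [max_eq_left h.le]
    have := (hasDerivAt_pow 2 x)
    simp at this
    refine this.congr_of_eventuallyEq ?_
    filter_upwards [Ioi_mem_nhds h] with u hu
    simp [max_eq_left (le_of_lt (by simpa using hu))]

theorem open_induct (τ : ℝ) (P : ℝ → Prop)
    (hopen : IsClosed {t | t ∈ Set.Icc 0 τ ∧ ¬ P t})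
    (hstep : ∀ t ∈ Set.Icc 0 τ, (∀ u, 0 ≤ u → u < t → P u) → P t) :
    ∀ t ∈ Set.Icc 0 τ, P t := by
  by_contra hcon
  push Not at hcon
  obtain ⟨t, ht, hPt⟩ := hcon
  have hc : IsCompact {t | t ∈ Set.Icc 0 τ ∧ ¬ P t} :=
    isCompact_Icc.of_isClosed_subset hopen (fun x hx => hx.1)
  obtain ⟨x, hx, hmin⟩ := hc.exists_isLeast ⟨t, ht, hPt⟩
  refine hx.2 (hstep x hx.1 ?_)
  intro u hu hux
  by_contra hPu
  have := hmin (show u ∈ {t | t ∈ Set.Icc 0 τ ∧ ¬ P t} from ⟨⟨hu, hux.le.trans hx.1.2⟩, hPu⟩)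
  linarith

theorem anti_of_hasDerivAt {g gd : ℝ → ℝ} {τ : ℝ}
    (hg : ∀ t ∈ Set.Icc 0 τ, HasDerivAt g (gd t) t)
    (h : ∀ t, 0 < t → t < τ → gd t ≤ 0) : AntitoneOn g (Set.Icc 0 τ) := by
  refine antitoneOn_of_deriv_nonpos (convex_Icc 0 τ)
    (fun t ht => (hg t ht).continuousAt.continuousWithinAt) ?_ ?_
  · intro t ht
    exact (hg t (interior_subset ht)).differentiableAt.differentiableWithinAt
  · intro t ht
    rw [(hg t (interior_subset ht)).deriv]
    rw [interior_Icc] at ht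
    exact h t ht.1 ht.2

theorem trap (s sd F Fd : ℝ → ℝ) (τ M M3 B r L η : ℝ) (hM : 0 < M) (hM3 : M ≤ M3) (hB : M3 < B)
    (hL : 0 ≤ L) (hη : 0 < η) 
    (hs : ∀ t ∈ Set.Icc 0 τ, HasDerivAt s (sd t) t)
    (hF : ∀ t ∈ Set.Icc 0 τ, HasDerivAt F (Fd t) t)
    (hF0 : ∀ t ∈ Set.Icc 0 τ, 0 ≤ F t)
    (H1 : ∀ t ∈ Set.Icc 0 τ, F t ≤ r^2 → -M ≤ s t → s t ≤ M → sd t ≤ -η)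
    (H2 : ∀ t ∈ Set.Icc 0 τ, s t ≤ -M3 → 0 ≤ sd t)
    (H3 : ∀ t ∈ Set.Icc 0 τ, F t ≤ r^2 → |s t| ≤ B → Fd t ≤ L * F t)
    (H4 : ∀ t ∈ Set.Icc 0 τ, F t ≤ r^2 → |s t| ≤ B → s t ≤ -(M/2) → Fd t ≤ 0)
    (I1 : |s 0| < M)
    (I2 : F 0 * Real.exp (L / (M * η) * (2*M)^2) < r^2) :
    ∀ t ∈ Set.Icc 0 τ, (|s t| < B ∧ s t < M ∧ F t < r^2) ∧ (64 * M / η ≤ t → s t < -(3*M/4)) := by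
  set l := L / (M * η) with hl
  have hl0 : 0 ≤ l := by positivity
  have I1' := abs_lt.1 I1
  -- the modified energy
  let G : ℝ → ℝ := fun t => F t * Real.exp (l * (max (s t + M) 0)^2)
  let Gd : ℝ → ℝ := fun t => Fd t * Real.exp (l * (max (s t + M) 0)^2) +
    F t * (Real.exp (l * (max (s t + M) 0)^2) * (l * (2 * max (s t + M) 0 * sd t)))
  have hh : ∀ t ∈ Set.Icc 0 τ, HasDerivAt (fun t => (max (s t + M) 0)^2)
      (2 * max (s t + M) 0 * sd t) t := by
    intro t ht
    exact (hasDerivAt_sqp (s t + M)).comp t ((hs t ht).add_const M)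
  have hh2 : ∀ t ∈ Set.Icc 0 τ, HasDerivAt (fun t => (max (-M3 - s t) 0)^2)
      (2 * max (-M3 - s t) 0 * (-sd t)) t := by
    intro t ht
    exact (hasDerivAt_sqp (-M3 - s t)).comp t ((hs t ht).const_sub (-M3))
  have hG : ∀ t ∈ Set.Icc 0 τ, HasDerivAt G (Gd t) t := by
    intro t ht
    exact (hF t ht).mul (((hh t ht).const_mul l).exp)
  have hFG : ∀ t ∈ Set.Icc 0 τ, F t ≤ G t := by
    intro t ht
    have : 1 ≤ Real.exp (l * (max (s t + M) 0)^2) := Real.one_le_exp (by positivity)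
    have := hF0 t ht
    simp only [G]
    nlinarith
  have cs : ContinuousOn s (Set.Icc 0 τ) := fun t ht => (hs t ht).continuousAt.continuousWithinAt
  have cG : ContinuousOn G (Set.Icc 0 τ) := fun t ht => (hG t ht).continuousAt.continuousWithinAt
  have key : ∀ t ∈ Set.Icc 0 τ, (s t < M ∧ -B < s t ∧ G t < r^2) := by
    apply open_induct
    · have : {t | t ∈ Set.Icc 0 τ ∧ ¬ (s t < M ∧ -B < s t ∧ G t < r^2)} =
        (Set.Icc 0 τ ∩ s ⁻¹' (Set.Ici M)) ∪ ((Set.Icc 0 τ ∩ s ⁻¹' (Set.Iic (-B))) ∪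
          (Set.Icc 0 τ ∩ G ⁻¹' (Set.Ici (r^2)))) := by
        ext t
        simp only [Set.mem_ofPred_eq, Set.mem_union, Set.mem_inter_iff, Set.mem_preimage,
          Set.mem_Ici, Set.mem_Iic, not_and_or, not_lt]
        tauto
      rw [this]
      exact (cs.preimage_isClosed_of_isClosed isClosed_Icc isClosed_Ici).union
        ((cs.preimage_isClosed_of_isClosed isClosed_Icc isClosed_Iic).union
        (cG.preimage_isClosed_of_isClosed isClosed_Icc isClosed_Ici))
    · intro x hx hP
      have sub : ∀ t ∈ Set.Icc 0 x, t ∈ Set.Icc 0 τ := fun t ht => ⟨ht.1, ht.2.trans hx.2⟩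
      have m0 : (0:ℝ) ∈ Set.Icc 0 x := ⟨le_rfl, hx.1⟩
      have mx : x ∈ Set.Icc 0 x := ⟨hx.1, le_rfl⟩
      have A1 : AntitoneOn (fun t => (max (s t + M) 0)^2) (Set.Icc 0 x) := by
        refine anti_of_hasDerivAt (fun t ht => hh t (sub t ht)) ?_
        intro t h0 h1
        obtain ⟨p1, p2, p3⟩ := hP t h0.le h1
        have htm := sub t ⟨h0.le, h1.le⟩
        rcases le_total (s t + M) 0 with h | h
        · rw [max_eq_right h]; simp
        · rw [max_eq_left h]
          have := H1 t htm ((hFG t htm).trans p3.le) (by linarith) p1.le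
          nlinarith
      have A2 : AntitoneOn (fun t => (max (-M3 - s t) 0)^2) (Set.Icc 0 x) := by
        refine anti_of_hasDerivAt (fun t ht => hh2 t (sub t ht)) ?_
        intro t h0 h1
        have htm := sub t ⟨h0.le, h1.le⟩
        rcases le_total (-M3 - s t) 0 with h | h
        · rw [max_eq_right h]; simp
        · rw [max_eq_left h]
          have := H2 t htm (by linarith)
          nlinarith
      have A3 : AntitoneOn G (Set.Icc 0 x) := by
        refine anti_of_hasDerivAt (fun t ht => hG t (sub t ht)) ?_
        intro t h0 h1
        obtain ⟨p1, p2, p3⟩ := hP t h0.le h1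
        have htm := sub t ⟨h0.le, h1.le⟩
        have hFr := (hFG t htm).trans p3.le
        have hab : |s t| ≤ B := abs_le.2 ⟨p2.le, by linarith⟩
        have hF0t := hF0 t htm
        have hfac : Gd t = Real.exp (l * (max (s t + M) 0)^2) *
          (Fd t + F t * (l * (2 * max (s t + M) 0 * sd t))) := by simp only [Gd]; ring
        rw [hfac]
        refine mul_nonpos_of_nonneg_of_nonpos (Real.exp_pos _).le ?_
        rcases le_total (s t + M) 0 with h | h
        · rw [max_eq_right h]
          have := H4 t htm hFr hab (by linarith)
          simpa using this
        · rw [max_eq_left h]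
          have hsd := H1 t htm hFr (by linarith) p1.le
          rcases le_total (s t) (-(M/2)) with h' | h'
          · have := H4 t htm hFr hab h'
            have : F t * (l * (2 * (s t + M) * sd t)) ≤ 0 := by
              refine mul_nonpos_of_nonneg_of_nonpos hF0t ?_
              refine mul_nonpos_of_nonneg_of_nonpos hl0 ?_
              refine mul_nonpos_of_nonneg_of_nonpos (by linarith) (by linarith)
            linarith
          · have h3 := H3 t htm hFr hab
            have e1 : 2 * (s t + M) * sd t ≤ -(M * η) := by nlinarith
            have e2 : l * (2 * (s t + M) * sd t) ≤ -L := by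
              calc _ ≤ l * (-(M * η)) := mul_le_mul_of_nonneg_left e1 hl0
                _ = -L := by rw [hl]; field_simp
            nlinarith [mul_le_mul_of_nonneg_left e2 hF0t]
      refine ⟨?_, ?_, ?_⟩
      · by_contra hc
        have h1 := A1 m0 mx hx.1
        simp only at h1
        rw [max_eq_left (by linarith), max_eq_left (by linarith)] at h1
        nlinarith
      · by_contra hc
        have h1 := A2 m0 mx hx.1
        simp only at h1
        rw [max_eq_left (by linarith), max_eq_right (by linarith)] at h1
        nlinarith
      · refine (A3 m0 mx hx.1).trans_lt (lt_of_le_of_lt ?_ I2)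
        refine mul_le_mul_of_nonneg_left ?_ (hF0 0 (sub 0 m0))
        apply Real.exp_le_exp.2
        apply mul_le_mul_of_nonneg_left _ hl0
        rw [max_eq_left (by linarith)]
        nlinarith
  intro t ht
  refine ⟨⟨abs_lt.2 ⟨(key t ht).2.1, by linarith [(key t ht).1]⟩, (key t ht).1,
    (hFG t ht).trans_lt (key t ht).2.2⟩, ?_⟩
  intro hT
  by_contra hc
  push Not at hc
  have A4 : AntitoneOn (fun t => (max (s t + M) 0)^2 * Real.exp (η / M * t)) (Set.Icc 0 τ) := by
    refine anti_of_hasDerivAt (fun t ht => (hh t ht).mul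
      (((hasDerivAt_id t).const_mul (η/M)).exp)) ?_
    intro t h0 h1
    have htm : t ∈ Set.Icc 0 τ := ⟨h0.le, h1.le⟩
    obtain ⟨p1, p2, p3⟩ := key t htm
    simp only [id, mul_one]
    have : 2 * max (s t + M) 0 * sd t + (max (s t + M) 0)^2 * (η/M) ≤ 0 := by
      rcases le_total (s t + M) 0 with h | h
      · rw [max_eq_right h]; simp
      · rw [max_eq_left h]
        have h1 := H1 t htm ((hFG t htm).trans p3.le) (by linarith) p1.le
        have h2 : (s t + M) * (η/M) ≤ 2 * η := by
          rw [mul_div_assoc', div_le_iff₀ hM]; nlinarith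
        nlinarith
    have e := Real.exp_pos (η / M * t)
    nlinarith
  have h1 := A4 (show (0:ℝ) ∈ Set.Icc 0 τ from ⟨le_rfl, ht.1.trans ht.2⟩) ht ht.1
  simp only at h1
  rw [max_eq_left (by linarith), max_eq_left (by linarith)] at h1
  have h2 : 65 ≤ Real.exp (η / M * t) := by
    have h3 := Real.add_one_le_exp (η / M * t)
    have h4 : 64 ≤ η / M * t := by
      rw [div_le_iff₀ hη] at hT
      rw [div_mul_eq_mul_div, le_div_iff₀ hM]; linarith
    linarith
  simp only [mul_zero, Real.exp_zero, mul_one] at h1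
  have h5 : M^2/16 ≤ (s t + M)^2 := by nlinarith
  have h6 : (s 0 + M)^2 ≤ 4 * M^2 := by nlinarith
  have h7 : M^2/16 * 65 ≤ (s t + M)^2 * Real.exp (η / M * t) :=
    mul_le_mul h5 h2 (by norm_num) (sq_nonneg _)
  have := sq_pos_of_pos hM
  linarith

theorem ode_extend {E : Type*} [NormedAddCommGroup E] [NormedSpace ℝ E] [FiniteDimensional ℝ E]
    (f : E → E) (hf : ContDiff ℝ 1 f) (X : ℝ → E) (a : EReal) (c β : ℝ) (hcβ : c < β)
    (ha : a < (c : EReal))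
    (hX : ∀ t : ℝ, a < (t : EReal) → t < β → HasDerivAt X (f (X t)) t) (R : ℝ)
    (hR : ∀ t, c ≤ t → t < β → ‖X t‖ ≤ R) :
    ∃ β' > β, ∃ Z : ℝ → E, (∀ t : ℝ, a < (t : EReal) → t < β' → HasDerivAt Z (f (Z t)) t) ∧
      ∀ t < β, Z t = X t := by
  have : ProperSpace E := FiniteDimensional.proper ℝ E
  have : CompleteSpace E := FiniteDimensional.complete ℝ E
  have hle : Filter.map X (nhdsWithin β (Set.Iio β)) ≤ Filter.principal (Metric.closedBall 0 R) := by
    rw [Filter.le_principal_iff, Filter.mem_map]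
    filter_upwards [Ico_mem_nhdsLT hcβ] with t ht
    simpa using hR t ht.1 ht.2
  obtain ⟨x0, -, hx0⟩ := (isCompact_closedBall (0:E) R) hle
  obtain ⟨r, hr, ε, hε, H⟩ :=
    ContDiffAt.exists_forall_mem_closedBall_exists_eq_forall_mem_Ioo_hasDerivAt
      (hf.contDiffAt (x := x0)) 0
  have hfr : ∃ᶠ t in nhdsWithin β (Set.Iio β), X t ∈ Metric.closedBall x0 r :=
    MapClusterPt.frequently hx0 (Metric.closedBall_mem_nhds x0 hr)
  have hev : ∀ᶠ t in nhdsWithin β (Set.Iio β), t ∈ Set.Ioo (max c (β - ε)) β :=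
    Ioo_mem_nhdsLT (max_lt hcβ (by linarith))
  obtain ⟨t0, ht0X, ht0, ht0β⟩ := (hfr.and_eventually hev).exists
  obtain ⟨hct0, hεt0⟩ := max_lt_iff.1 ht0
  obtain ⟨α, hα0, hα⟩ := H _ ht0X
  have hat0 : ∀ t : ℝ, t0 ≤ t → a < (t : EReal) := fun t ht =>
    ha.trans (EReal.coe_lt_coe_iff.2 (hct0.trans_le ht))
  let Y : ℝ → E := fun t => α (t - t0)
  have hY : ∀ t, t0 - ε < t → t < t0 + ε → HasDerivAt Y (f (Y t)) t := by
    intro t h1 h2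
    have := hα (t - t0) ⟨by linarith, by linarith⟩
    simpa using this.comp_sub_const t t0
  have hY0 : X t0 = Y t0 := by simp [Y, hα0]
  have huniq : ∀ t, t0 < t → t < β → X t = Y t := by
    intro t h1 h2
    have cX : ContinuousOn X (Set.Icc t0 t) := fun u hu =>
      (hX u (hat0 u hu.1) (hu.2.trans_lt h2)).continuousAt.continuousWithinAt
    have cY : ContinuousOn Y (Set.Icc t0 t) := fun u hu =>
      (hY u (by linarith [hu.1]) (by linarith [hu.2])).continuousAt.continuousWithinAt
    obtain ⟨r1, h1'⟩ := (isCompact_Icc.image_of_continuousOn cX).isBounded.subset_closedBall (0:E)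
    obtain ⟨r2, h2'⟩ := (isCompact_Icc.image_of_continuousOn cY).isBounded.subset_closedBall (0:E)
    obtain ⟨K, hK⟩ := (hf.contDiffOn (s := Metric.closedBall (0:E) (max r1 r2))).exists_lipschitzOnWith
      one_ne_zero (convex_closedBall _ _) (isCompact_closedBall _ _)
    refine ODE_solution_unique_of_mem_Icc_right (v := fun _ => f)
      (s := fun _ => Metric.closedBall (0:E) (max r1 r2)) (K := K) (fun _ _ => hK) cX ?_ ?_ cY ?_ ?_ hY0
      ⟨h1.le, le_rfl⟩
    · intro u hu
      exact (hX u (hat0 u hu.1) (hu.2.trans h2)).hasDerivWithinAt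
    · intro u hu
      exact Metric.closedBall_subset_closedBall (le_max_left _ _)
        (h1' (Set.mem_image_of_mem _ ⟨hu.1, hu.2.le⟩))
    · intro u hu
      exact (hY u (by linarith [hu.1]) (by linarith [hu.2])).hasDerivWithinAt
    · intro u hu
      exact Metric.closedBall_subset_closedBall (le_max_right _ _)
        (h2' (Set.mem_image_of_mem _ ⟨hu.1, hu.2.le⟩))
  refine ⟨t0 + ε, by linarith, fun t => if t < β then X t else Y t, ?_, ?_⟩
  · intro t hat ht
    rcases lt_or_ge t β with h | h
    · have he : (fun t => if t < β then X t else Y t) =ᶠ[nhds t] X := by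
        filter_upwards [Iio_mem_nhds h] with u hu
        rw [if_pos (by simpa using hu)]
      simp only [h, if_true]
      exact (hX t hat h).congr_of_eventuallyEq he
    · have he : (fun t => if t < β then X t else Y t) =ᶠ[nhds t] Y := by
        filter_upwards [Ioi_mem_nhds (ht0β.trans_le h)] with u hu
        split_ifs with h'
        · exact huniq u hu h'
        · rfl
      simp only [not_lt.2 h, if_false]
      exact (hY t (by linarith) ht).congr_of_eventuallyEq he
  · intro t ht
    simp [ht]

noncomputable section HCU
variable {m : ℕ}

/-- right-hand side of the second-order system -/
def hcuRhs (x p : Fin m → ℝ) (j : Fin m) : ℝ :=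
  ((∑ k, x k) + x j) * p j + (x j * (∑ k, (x k)^2) - (x j)^2 * (∑ k, x k))

/-- the average -/
def hcuAv (x : Fin m → ℝ) : ℝ := (∑ k, x k) / m

/-- the deviation from the average -/
def hcuV (x : Fin m → ℝ) (j : Fin m) : ℝ := x j - hcuAv x

/-- the adapted velocity of the deviation -/
def hcuW (x p : Fin m → ℝ) (j : Fin m) : ℝ := p j - hcuAv p - hcuAv x * hcuV x j

/-- energy -/
def hcuF (A : ℝ) (x p : Fin m → ℝ) : ℝ := (∑ j, (hcuV x j)^2) + A * ∑ j, (hcuW x p j)^2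

theorem sum_eq_av (hm : 0 < m) (x : Fin m → ℝ) : ∑ k, x k = m * hcuAv x := by
  unfold hcuAv
  have : (m:ℝ) ≠ 0 := by positivity
  field_simp

theorem sum_hcuV (hm : 0 < m) (x : Fin m → ℝ) : ∑ k, hcuV x k = 0 := by
  simp [hcuV, Finset.sum_sub_distrib, sum_eq_av hm x]

theorem sum_hcuW (hm : 0 < m) (x p : Fin m → ℝ) : ∑ k, hcuW x p k = 0 := by
  simp only [hcuW, Finset.sum_sub_distrib, ← Finset.mul_sum, sum_hcuV hm, sum_eq_av hm p]
  simp

theorem sum_sq_eq (hm : 0 < m) (x : Fin m → ℝ) :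
    ∑ k, (x k)^2 = m * (hcuAv x)^2 + ∑ k, (hcuV x k)^2 := by
  have h : ∀ k, (x k)^2 = (hcuAv x)^2 + 2 * hcuAv x * hcuV x k + (hcuV x k)^2 := by
    intro k; unfold hcuV; ring
  rw [Finset.sum_congr rfl (fun k _ => h k)]
  simp only [Finset.sum_add_distrib, ← Finset.mul_sum, sum_hcuV hm]
  simp

theorem sum_mul_eq (hm : 0 < m) (x p : Fin m → ℝ) :
    ∑ k, x k * p k = m * (hcuAv x * hcuAv p) + (hcuAv x * ∑ k, (hcuV x k)^2)
      + ∑ k, hcuV x k * hcuW x p k := by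
  have h : ∀ k, x k * p k = hcuAv x * hcuAv p + (hcuAv x)^2 * hcuV x k + hcuAv x * hcuW x p k
     + hcuAv p * hcuV x k + hcuAv x * (hcuV x k)^2 + hcuV x k * hcuW x p k := by
    intro k
    have h1 : x k = hcuAv x + hcuV x k := by unfold hcuV; ring
    have h2 : p k = hcuAv p + hcuAv x * hcuV x k + hcuW x p k := by unfold hcuW; ring
    generalize hcuV x k = v at *
    generalize hcuW x p k = w at *
    rw [h1, h2]; ring
  rw [Finset.sum_congr rfl (fun k _ => h k)]
  simp only [Finset.sum_add_distrib, ← Finset.mul_sum, sum_hcuV hm, sum_hcuW hm]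
  simp
  ring

theorem av_rhs (hm : 0 < m) (x p : Fin m → ℝ) :
    hcuAv (hcuRhs x p) = (m + 1) * (hcuAv x * hcuAv p)
      + (hcuAv x * ∑ k, (hcuV x k)^2 + ∑ k, hcuV x k * hcuW x p k) / m := by
  have hm' : (m:ℝ) ≠ 0 := by positivity
  have h : ∑ k, hcuRhs x p k = (∑ k, x k) * (∑ k, p k) + ∑ k, x k * p k := by
    simp only [hcuRhs, Finset.sum_add_distrib, Finset.sum_sub_distrib, add_mul, ← Finset.mul_sum,
      ← Finset.sum_mul]
    ring
  have h0 : hcuAv (hcuRhs x p) = (∑ k, hcuRhs x p k) / m := rfl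
  rw [h0, h, sum_mul_eq hm, sum_eq_av hm, sum_eq_av hm]
  field_simp
  ring

theorem dw_eq (hm : 0 < m) (x p : Fin m → ℝ) (j : Fin m) :
    hcuRhs x p j - hcuAv (hcuRhs x p) - (hcuAv p * hcuV x j + hcuAv x * (p j - hcuAv p)) =
     m * hcuAv x * hcuW x p j + (1 - m) * hcuAv x * (hcuV x j)^2 + hcuV x j * hcuW x p j
     + hcuV x j * (∑ k, (hcuV x k)^2) + (hcuAv x * (∑ k, (hcuV x k)^2)
      - (hcuAv x * ∑ k, (hcuV x k)^2 + ∑ k, hcuV x k * hcuW x p k) / m) := by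
  rw [av_rhs hm, hcuRhs, sum_sq_eq hm, sum_eq_av hm]
  have h1 : x j = hcuAv x + hcuV x j := by unfold hcuV; ring
  have h2 : p j = hcuAv p + hcuAv x * hcuV x j + hcuW x p j := by unfold hcuW; ring
  generalize (∑ k, (hcuV x k)^2) = V at *
  generalize (∑ k, hcuV x k * hcuW x p k) = P at *
  generalize hcuV x j = v at *
  generalize hcuW x p j = w at *
  rw [h1, h2]
  ring

/-- derivative of the energy -/
def hcuFd (A : ℝ) (x p : Fin m → ℝ) : ℝ :=
  2 * (hcuAv x * (∑ k, (hcuV x k)^2) + ∑ k, hcuV x k * hcuW x p k) +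
  A * (2 * (m * hcuAv x * (∑ k, (hcuW x p k)^2)
    + (1 - m) * hcuAv x * (∑ k, hcuW x p k * (hcuV x k)^2)
    + (∑ k, hcuV x k * (hcuW x p k)^2)
    + (∑ k, (hcuV x k)^2) * (∑ k, hcuV x k * hcuW x p k)))

theorem hasDerivAt_av {y yd : ℝ → Fin m → ℝ} {t : ℝ}
    (h : ∀ j, HasDerivAt (fun s => y s j) (yd t j) t) :
    HasDerivAt (fun s => hcuAv (y s)) (hcuAv (yd t)) t := by
  unfold hcuAv
  exact (HasDerivAt.fun_sum (fun j _ => h j)).div_const _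

theorem hasDerivAt_V2 (y p : ℝ → Fin m → ℝ) (t : ℝ)
    (h1 : ∀ j, HasDerivAt (fun s => y s j) (p t j) t) :
    HasDerivAt (fun s => ∑ j, (hcuV (y s) j)^2)
      (2 * (hcuAv (y t) * (∑ k, (hcuV (y t) k)^2) + ∑ k, hcuV (y t) k * hcuW (y t) (p t) k)) t := by
  have hs := hasDerivAt_av h1
  have hv : ∀ j, HasDerivAt (fun s => hcuV (y s) j) (p t j - hcuAv (p t)) t :=
    fun j => (h1 j).sub hs
  have := HasDerivAt.fun_sum (u := Finset.univ) (fun j _ => (hv j).pow 2)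
  refine this.congr_deriv ?_
  rw [Finset.mul_sum, ← Finset.sum_add_distrib, Finset.mul_sum]
  refine Finset.sum_congr rfl (fun j _ => ?_)
  simp only [hcuW]
  norm_num
  ring

theorem hasDerivAt_F (hm : 0 < m) (A : ℝ) (y p : ℝ → Fin m → ℝ) (t : ℝ)
    (h1 : ∀ j, HasDerivAt (fun s => y s j) (p t j) t)
    (h2 : ∀ j, HasDerivAt (fun s => p s j) (hcuRhs (y t) (p t) j) t) :
    HasDerivAt (fun s => hcuF A (y s) (p s)) (hcuFd A (y t) (p t)) t := by
  have hs := hasDerivAt_av h1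
  have hp : HasDerivAt (fun s => hcuAv (p s)) (hcuAv (hcuRhs (y t) (p t))) t :=
    hasDerivAt_av (yd := fun s => hcuRhs (y s) (p s)) h2
  have hv : ∀ j, HasDerivAt (fun s => hcuV (y s) j) (p t j - hcuAv (p t)) t :=
    fun j => (h1 j).sub hs
  have hw : ∀ j, HasDerivAt (fun s => hcuW (y s) (p s) j) _ t :=
    fun j => (((h2 j).sub hp).sub (hs.mul (hv j))).congr_deriv (dw_eq hm (y t) (p t) j)
  have hW2 := HasDerivAt.fun_sum (u := Finset.univ) (fun j _ => (hw j).pow 2)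
  refine ((hasDerivAt_V2 y p t h1).add (hW2.const_mul A)).congr_deriv ?_
  unfold hcuFd
  congr 2
  have hsw := sum_hcuW hm (y t) (p t)
  generalize (hcuAv (y t) * (∑ k, (hcuV (y t) k)^2)
      - (hcuAv (y t) * ∑ k, (hcuV (y t) k)^2 + ∑ k, hcuV (y t) k * hcuW (y t) (p t) k) / m) = c at *
  generalize (∑ k, (hcuV (y t) k)^2) = V at *
  have : ∀ c' : ℝ, c' = c' + 2 * c * ∑ k, hcuW (y t) (p t) k := by intro c'; rw [hsw]; ring
  rw [this (2 * _)]
  simp only [Finset.mul_sum, ← Finset.sum_add_distrib]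
  refine Finset.sum_congr rfl (fun j _ => ?_)
  norm_num
  ring

theorem sum_bounds (v w : Fin m → ℝ) (r : ℝ) (hr : 0 ≤ r) (hv : ∀ j, |v j| ≤ r) :
    |∑ k, w k * (v k)^2| ≤ r * (∑ k, (v k)^2 + ∑ k, (w k)^2) ∧
    |∑ k, v k * (w k)^2| ≤ r * (∑ k, (v k)^2 + ∑ k, (w k)^2) ∧
    |∑ k, v k * w k| ≤ (∑ k, (v k)^2 + ∑ k, (w k)^2) := by
  have e : ∀ j, |v j * w j| ≤ (v j)^2 + (w j)^2 := by
    intro j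
    rw [abs_mul, ← sq_abs (v j), ← sq_abs (w j)]
    nlinarith [sq_nonneg (|v j| - |w j|), abs_nonneg (v j), abs_nonneg (w j)]
  rw [← Finset.sum_add_distrib, Finset.mul_sum]
  refine ⟨?_, ?_, ?_⟩
  · refine (Finset.abs_sum_le_sum_abs _ _).trans (Finset.sum_le_sum fun j _ => ?_)
    have : w j * (v j)^2 = v j * (v j * w j) := by ring
    rw [this, abs_mul]
    exact mul_le_mul (hv j) (e j) (abs_nonneg _) hr
  · refine (Finset.abs_sum_le_sum_abs _ _).trans (Finset.sum_le_sum fun j _ => ?_)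
    rw [abs_mul, abs_of_nonneg (sq_nonneg (w j))]
    exact mul_le_mul (hv j) (by nlinarith [sq_nonneg (v j)]) (sq_nonneg _) hr
  · exact (Finset.abs_sum_le_sum_abs _ _).trans (Finset.sum_le_sum fun j _ => e j)

/-- purely scalar estimate for the energy derivative -/
theorem Fd_bounds (n s V W P X1 X2 r B σ A : ℝ) (hn : 1 ≤ n) (hV : 0 ≤ V) (hW : 0 ≤ W)
    (hP : |P| ≤ V + W) (hP' : 2 * P ≤ σ * V + W / σ)
    (hX1 : |X1| ≤ r * (V + W)) (hX2 : |X2| ≤ r * (V + W))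
    (hr : 0 ≤ r) (hVr : V ≤ r) (hsB : |s| ≤ B) (hσ : 0 < σ) (hA : A = 1 / σ^2)
    (hrs : 2 * A * (n * B + 2) * (1 + σ^2) * r ≤ σ) :
    2 * (s * V + P) + A * (2 * (n * s * W + (1 - n) * s * X1 + X2 + V * P))
      ≤ (2 * n * B + 2 * (1 + σ^2) + σ) * (V + A * W) ∧
    (s ≤ -σ → 2 * (s * V + P) + A * (2 * (n * s * W + (1 - n) * s * X1 + X2 + V * P)) ≤ 0) := by
  have hA0 : 0 < A := by rw [hA]; positivity
  have hAσ : A * σ^2 = 1 := by rw [hA]; field_simp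
  have hB : 0 ≤ B := (abs_nonneg s).trans hsB
  have hVW : V + W ≤ (1 + σ^2) * (V + A * W) := by
    have : (1 + σ^2) * (V + A * W) = V + W + σ^2 * V + A * W := by
      linear_combination W * hAσ
    have i1 : 0 ≤ σ^2 * V := by positivity
    have i2 : 0 ≤ A * W := by positivity
    linarith
  have c1 : (1 - n) * s * X1 ≤ (n * B) * (r * (V + W)) - B * (r * (V+W)) := by
    have h1 : |(1 - n) * s * X1| ≤ ((n - 1) * B) * (r * (V + W)) := by
      rw [abs_mul, abs_mul]
      refine mul_le_mul (mul_le_mul ?_ hsB (abs_nonneg _) (by linarith)) hX1 (abs_nonneg _)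
        (mul_nonneg (by linarith) hB)
      rw [abs_sub_comm, abs_of_nonneg (by linarith)]
    have := le_abs_self ((1 - n) * s * X1)
    linarith
  have c2 : X2 ≤ r * (V + W) := (le_abs_self _).trans hX2
  have c3 : V * P ≤ r * (V + W) :=
    (mul_le_mul_of_nonneg_left ((le_abs_self _).trans hP) hV).trans
      (mul_le_mul_of_nonneg_right hVr (by linarith))
  have hVW0 : 0 ≤ r * (V + W) := mul_nonneg hr (by linarith)
  have cub : (1 - n) * s * X1 + X2 + V * P ≤ (n * B + 2) * (r * (V + W)) := by
    nlinarith [mul_nonneg hB hVW0]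
  have hF : 0 ≤ V + A * W := by positivity
  have cub2 : A * (2 * ((1 - n) * s * X1 + X2 + V * P)) ≤ σ * (V + A * W) := by
    have k0 : 0 ≤ 2 * A * (n * B + 2) * r := by positivity
    calc A * (2 * ((1 - n) * s * X1 + X2 + V * P)) ≤ A * (2 * ((n * B + 2) * (r * (V + W)))) := by
          gcongr
      _ = (2 * A * (n * B + 2) * r) * (V + W) := by ring
      _ ≤ (2 * A * (n * B + 2) * r) * ((1 + σ^2) * (V + A * W)) :=
          mul_le_mul_of_nonneg_left hVW k0
      _ = (2 * A * (n * B + 2) * (1 + σ^2) * r) * (V + A * W) := by ring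
      _ ≤ σ * (V + A * W) := mul_le_mul_of_nonneg_right hrs hF
  have hs := abs_le.1 hsB
  constructor
  · have l1 : s * V ≤ n * B * V := by
      have : s ≤ n * B := by nlinarith
      exact mul_le_mul_of_nonneg_right this hV
    have l2 : n * s * (A * W) ≤ n * B * (A * W) := by
      have : n * s ≤ n * B := by nlinarith
      exact mul_le_mul_of_nonneg_right this (by positivity)
    have l3 : P ≤ (1 + σ^2) * (V + A * W) := ((le_abs_self _).trans hP).trans hVW
    nlinarith
  · intro hsσ
    have l1 : s * V ≤ -σ * V := mul_le_mul_of_nonneg_right hsσ hV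
    have l2 : n * s * (A * W) ≤ -σ * (A * W) := by
      have : n * s ≤ -σ := by nlinarith
      exact mul_le_mul_of_nonneg_right this (by positivity)
    have l3 : W / σ = σ * (A * W) := by rw [hA]; field_simp
    nlinarith

theorem young_sum (v w : Fin m → ℝ) (σ : ℝ) (hσ : 0 < σ) :
    2 * ∑ k, v k * w k ≤ σ * (∑ k, (v k)^2) + (∑ k, (w k)^2) / σ := by
  rw [Finset.mul_sum, Finset.mul_sum, Finset.sum_div, ← Finset.sum_add_distrib]
  refine Finset.sum_le_sum fun j _ => ?_
  have : σ * (v j)^2 + (w j)^2/σ - 2 * (v j * w j) = (σ * v j - w j)^2 / σ := by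
    field_simp; ring
  have h2 : 0 ≤ (σ * v j - w j)^2 / σ := by positivity
  linarith

/-- first-order formulation of being a solution -/
def hcuSol (a b : EReal) (y p : ℝ → Fin m → ℝ) : Prop :=
  ∀ t : ℝ, a < (t : EReal) → (t : EReal) < b →
    (∀ j, HasDerivAt (fun s => y s j) (p t j) t) ∧
    (∀ j, HasDerivAt (fun s => p s j) (hcuRhs (y t) (p t) j) t)

/-- the first integral -/
def hcuI (x p : Fin m → ℝ) : ℝ :=
  hcuAv p - (m + 1) / 2 * (hcuAv x)^2 - (∑ j, (hcuV x j)^2) / (2 * m)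

theorem hasDerivAt_I (hm : 0 < m) (y p : ℝ → Fin m → ℝ) (t : ℝ)
    (h1 : ∀ j, HasDerivAt (fun s => y s j) (p t j) t)
    (h2 : ∀ j, HasDerivAt (fun s => p s j) (hcuRhs (y t) (p t) j) t) :
    HasDerivAt (fun s => hcuI (y s) (p s)) 0 t := by
  have hs := hasDerivAt_av h1
  have hp : HasDerivAt (fun s => hcuAv (p s)) (hcuAv (hcuRhs (y t) (p t))) t :=
    hasDerivAt_av (yd := fun s => hcuRhs (y s) (p s)) h2
  have hm' : (m:ℝ) ≠ 0 := by positivity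
  refine ((hp.sub ((hs.pow 2).const_mul (((m:ℝ) + 1) / 2))).sub
    ((hasDerivAt_V2 y p t h1).div_const (2 * (m:ℝ)))).congr_deriv ?_
  rw [av_rhs hm]
  field_simp
  norm_num
  ring

theorem I_const (hm : 0 < m) (y p : ℝ → Fin m → ℝ) (τ : ℝ) (hτ : 0 ≤ τ)
    (h : ∀ t ∈ Set.Icc 0 τ, (∀ j, HasDerivAt (fun s => y s j) (p t j) t) ∧
    (∀ j, HasDerivAt (fun s => p s j) (hcuRhs (y t) (p t) j) t)) :
    hcuI (y τ) (p τ) = hcuI (y 0) (p 0) := by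
  have d := fun t ht => hasDerivAt_I hm y p t (h t ht).1 (h t ht).2
  have a1 := anti_of_hasDerivAt (gd := fun _ => 0) d (fun _ _ _ => le_rfl)
    ⟨le_rfl, hτ⟩ ⟨hτ, le_rfl⟩ hτ
  have a2 := anti_of_hasDerivAt (gd := fun _ => -0) (fun t ht => (d t ht).neg) (fun _ _ _ => by simp)
    ⟨le_rfl, hτ⟩ ⟨hτ, le_rfl⟩ hτ
  simp at a1 a2
  linarith

theorem Fd_le (hm : 0 < m) (x p : Fin m → ℝ) (r B σ A : ℝ) (hr : 0 < r) (hr1 : r ≤ 1)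
    (hsB : |hcuAv x| ≤ B) (hσ : 0 < σ) (hA : A = 1 / σ^2)
    (hrs : 2 * A * (m * B + 2) * (1 + σ^2) * r ≤ σ) (hF : hcuF A x p ≤ r^2) :
    hcuFd A x p ≤ (2 * m * B + 2 * (1 + σ^2) + σ) * hcuF A x p ∧
    (hcuAv x ≤ -σ → hcuFd A x p ≤ 0) := by
  have hA0 : 0 < A := by rw [hA]; positivity
  have hV : 0 ≤ ∑ j, (hcuV x j)^2 := Finset.sum_nonneg fun j _ => sq_nonneg _
  have hW : 0 ≤ ∑ j, (hcuW x p j)^2 := Finset.sum_nonneg fun j _ => sq_nonneg _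
  have hVr : ∑ j, (hcuV x j)^2 ≤ r^2 := by
    have := mul_nonneg hA0.le hW
    unfold hcuF at hF
    linarith
  have hv : ∀ j, |hcuV x j| ≤ r := by
    intro j
    refine abs_le_of_sq_le_sq (le_trans ?_ hVr) hr.le
    exact Finset.single_le_sum (f := fun j => (hcuV x j)^2) (fun j _ => sq_nonneg _)
      (Finset.mem_univ j)
  obtain ⟨b1, b2, b3⟩ := sum_bounds (hcuV x) (hcuW x p) r hr.le hv
  exact Fd_bounds m (hcuAv x) _ _ _ _ _ r B σ A (by exact_mod_cast hm) hV hW b3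
    (young_sum _ _ σ hσ) b1 b2 hr.le (hVr.trans (by nlinarith)) hsB hσ hA hrs

set_option maxHeartbeats 1000000 in
theorem forward (hm : 0 < m) (ξ ζ : ℝ) (hζ : 0 < ζ) :
    ∃ W ∈ nhds (((fun _ => ξ), (fun _ => -ζ)) : (Fin m → ℝ) × (Fin m → ℝ)),
      ∀ (a b : EReal) (y p : ℝ → Fin m → ℝ), a < ((0 : ℝ) : EReal) → hcuSol a b y p →
        (y 0, p 0) ∈ W →
        (∃ R, ∀ t : ℝ, 0 ≤ t → (t : EReal) < b → ∀ j, |y t j| ≤ R ∧ |p t j| ≤ R) ∧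
        ∃ δ > 0, ∃ T > 0, ∀ t : ℝ, T ≤ t → (t : EReal) < b → ∀ j, y t j < -δ := by
  have hmR : (1:ℝ) ≤ m := by exact_mod_cast hm
  have hmR0 : (0:ℝ) < m := by linarith
  obtain ⟨M, hM, hM2⟩ : ∃ M > 0, M^2 = ξ^2 + ζ / (m+1) :=
    ⟨Real.sqrt (ξ^2 + ζ / (m+1)), Real.sqrt_pos.2 (by positivity), Real.sq_sqrt (by positivity)⟩
  have hξM : |ξ| < M := abs_lt_of_sq_lt_sq (by rw [hM2]; linarith [show 0 < ζ / ((m:ℝ)+1) by positivity]) hM.le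
  obtain ⟨C0, hC0⟩ : ∃ C0, C0 = ζ + (m+1)/2 * ξ^2 := ⟨_, rfl⟩
  have hC0p : 0 < C0 := by rw [hC0]; positivity
  have hMC : ((m:ℝ)+1)/2 * M^2 = C0 - ζ/2 := by rw [hM2, hC0]; field_simp; ring
  obtain ⟨M3, hM3⟩ : ∃ M3, M3 = C0 + ζ + 1 + M := ⟨_, rfl⟩
  obtain ⟨B, hB⟩ : ∃ B, B = M3 + 1 := ⟨_, rfl⟩
  have hB0 : 0 < B := by linarith
  obtain ⟨σ, hσ⟩ : ∃ σ, σ = M/2 := ⟨_, rfl⟩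
  have hσ0 : 0 < σ := by linarith
  obtain ⟨A, hA⟩ : ∃ A, A = 1/σ^2 := ⟨_, rfl⟩
  have hA0 : 0 < A := by rw [hA]; positivity
  obtain ⟨D, hD⟩ : ∃ D, D = 2 * A * (m * B + 2) * (1 + σ^2) := ⟨_, rfl⟩
  have hD0 : 0 < D := by rw [hD]; positivity
  obtain ⟨r, hr0, hr1, hrM, hrζ, hrD⟩ : ∃ r > 0, r ≤ 1 ∧ r ≤ M/4 ∧ r ≤ ζ/8 ∧ D * r ≤ σ := by
    refine ⟨min 1 (min (M/4) (min (ζ/8) (σ/D))), by positivity, min_le_left _ _, ?_, ?_, ?_⟩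
    · exact (min_le_right _ _).trans (min_le_left _ _)
    · exact (min_le_right _ _).trans ((min_le_right _ _).trans (min_le_left _ _))
    · have : min 1 (min (M/4) (min (ζ/8) (σ/D))) ≤ σ/D :=
        (min_le_right _ _).trans ((min_le_right _ _).trans (min_le_right _ _))
      rw [le_div_iff₀ hD0] at this
      linarith
  obtain ⟨L, hL⟩ : ∃ L, L = 2 * m * B + 2 * (1 + σ^2) + σ := ⟨_, rfl⟩
  have hL0 : 0 ≤ L := by rw [hL]; positivity
  have hη : 0 < ζ/4 := by linarith
  -- the neighbourhood
  refine ⟨{z | |hcuAv z.1| < M ∧ |hcuI z.1 z.2 + C0| < ζ/8 ∧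
    hcuF A z.1 z.2 * Real.exp (L / (M * (ζ/4)) * (2*M)^2) < r^2}, ?_, ?_⟩
  · have cAv1 : Continuous (fun z : (Fin m → ℝ) × (Fin m → ℝ) => hcuAv z.1) := by
      unfold hcuAv; fun_prop
    have cAv2 : Continuous (fun z : (Fin m → ℝ) × (Fin m → ℝ) => hcuAv z.2) := by
      unfold hcuAv; fun_prop
    have cV : ∀ j, Continuous (fun z : (Fin m → ℝ) × (Fin m → ℝ) => hcuV z.1 j) := by
      intro j; unfold hcuV; fun_prop
    have cW : ∀ j, Continuous (fun z : (Fin m → ℝ) × (Fin m → ℝ) => hcuW z.1 z.2 j) := by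
      intro j; unfold hcuW
      have := cV j
      fun_prop
    have cI : Continuous (fun z : (Fin m → ℝ) × (Fin m → ℝ) => hcuI z.1 z.2) := by
      unfold hcuI; fun_prop
    have cF : Continuous (fun z : (Fin m → ℝ) × (Fin m → ℝ) => hcuF A z.1 z.2) := by
      unfold hcuF; fun_prop
    have av_c : ∀ c : ℝ, hcuAv (fun _ : Fin m => c) = c := by
      intro c; simp [hcuAv]; field_simp
    have V_c : ∀ (c : ℝ) j, hcuV (fun _ : Fin m => c) j = 0 := by
      intro c j; simp [hcuV, av_c]
    have W_c : ∀ (c d : ℝ) j, hcuW (fun _ : Fin m => c) (fun _ => d) j = 0 := by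
      intro c d j; simp [hcuW, av_c, V_c]
    apply IsOpen.mem_nhds
    · exact (isOpen_lt cAv1.abs continuous_const).inter
        ((isOpen_lt (cI.add continuous_const).abs continuous_const).inter
          (isOpen_lt (cF.mul continuous_const) continuous_const))
    · refine ⟨?_, ?_, ?_⟩
      · simpa [av_c] using hξM
      · simp only [hcuI, av_c, V_c, hC0]
        ring_nf
        simpa using hζ
      · simp only [hcuF, V_c, W_c]
        simpa using pow_pos hr0 2
  · rintro a b y p ha hsol ⟨w1, w2, w3⟩
    simp only at w1 w2 w3
    obtain ⟨C, hC⟩ : ∃ C, C = - hcuI (y 0) (p 0) := ⟨_, rfl⟩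
    have w2' := abs_lt.1 w2
    -- facts at a fixed time
    have hin : ∀ t : ℝ, 0 ≤ t → a < (t : EReal) := fun t ht =>
      ha.trans_le (EReal.coe_le_coe_iff.2 ht)
    have main : ∀ t : ℝ, 0 ≤ t → (t : EReal) < b →
        ((|hcuAv (y t)| < B ∧ hcuAv (y t) < M ∧ hcuF A (y t) (p t) < r^2) ∧
          (64 * M / (ζ/4) ≤ t → hcuAv (y t) < -(3*M/4))) ∧
        hcuAv (p t) = (m + 1) / 2 * (hcuAv (y t))^2 + (∑ j, (hcuV (y t) j)^2) / (2 * m) - C := by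
      intro τ hτ hτb
      have hd : ∀ t ∈ Set.Icc 0 τ, (∀ j, HasDerivAt (fun s => y s j) (p t j) t) ∧
          (∀ j, HasDerivAt (fun s => p s j) (hcuRhs (y t) (p t) j) t) := fun t ht =>
        hsol t (hin t ht.1) ((EReal.coe_le_coe_iff.2 ht.2).trans_lt hτb)
      have hsd : ∀ t ∈ Set.Icc 0 τ, hcuAv (p t) = (m + 1) / 2 * (hcuAv (y t))^2
          + (∑ j, (hcuV (y t) j)^2) / (2 * m) - C := by
        intro t ht
        have := I_const hm y p t ht.1 (fun u hu => hd u ⟨hu.1, hu.2.trans ht.2⟩)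
        rw [hC, ← this, hcuI]; ring
      have hV0 : ∀ t, 0 ≤ ∑ j, (hcuV (y t) j)^2 := fun t => Finset.sum_nonneg fun j _ => sq_nonneg _
      have hAW : ∀ t, 0 ≤ A * ∑ j, (hcuW (y t) (p t) j)^2 := fun t =>
        mul_nonneg hA0.le (Finset.sum_nonneg fun j _ => sq_nonneg _)
      refine ⟨?_, hsd τ ⟨hτ, le_rfl⟩⟩
      refine trap (fun t => hcuAv (y t)) (fun t => hcuAv (p t)) (fun t => hcuF A (y t) (p t))
        (fun t => hcuFd A (y t) (p t)) τ M M3 B r L (ζ/4) hM (by linarith) (by linarith) hL0 hη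
        (fun t ht => hasDerivAt_av (hd t ht).1)
        (fun t ht => hasDerivAt_F hm A y p t (hd t ht).1 (hd t ht).2) ?_ ?_ ?_ ?_ ?_ w1 w3 τ ⟨hτ, le_rfl⟩
      · intro t ht
        exact add_nonneg (hV0 t) (hAW t)
      · intro t ht h1 h2 h3
        rw [hsd t ht]
        have e1 : (∑ j, (hcuV (y t) j)^2) ≤ ζ/8 := by
          have := hAW t
          unfold hcuF at h1
          nlinarith
        have e2 : (∑ j, (hcuV (y t) j)^2) / (2 * m) ≤ ζ/8 := by
          rw [div_le_iff₀ (by positivity)]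
          nlinarith
        have e3 : ((m:ℝ)+1)/2 * (hcuAv (y t))^2 ≤ (m+1)/2 * M^2 :=
          mul_le_mul_of_nonneg_left (by nlinarith) (by positivity)
        linarith
      · intro t ht h1
        rw [hsd t ht]
        have e2 : 0 ≤ (∑ j, (hcuV (y t) j)^2) / (2 * m) := div_nonneg (hV0 t) (by positivity)
        have e3 : M3^2 ≤ (hcuAv (y t))^2 := by nlinarith
        have e4 : C0 + ζ ≤ M3^2 := by nlinarith
        have e5 : (hcuAv (y t))^2 ≤ ((m:ℝ)+1)/2 * (hcuAv (y t))^2 := by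
          nlinarith [sq_nonneg (hcuAv (y t))]
        linarith
      · intro t ht h1 h2
        rw [hL]
        exact (Fd_le hm _ _ r B σ A hr0 hr1 h2 hσ0 hA (by rw [← hD]; exact hrD) h1).1
      · intro t ht h1 h2 h3
        exact (Fd_le hm _ _ r B σ A hr0 hr1 h2 hσ0 hA (by rw [← hD]; exact hrD) h1).2
          (by rw [hσ]; exact h3)
    have sV : ∀ t : ℝ, 0 ≤ t → (t : EReal) < b → (∑ j, (hcuV (y t) j)^2) ≤ r^2 := by
      intro t h0 hb
      have h1 := (main t h0 hb).1.1.2.2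
      have : 0 ≤ A * ∑ j, (hcuW (y t) (p t) j)^2 :=
        mul_nonneg hA0.le (Finset.sum_nonneg fun j _ => sq_nonneg _)
      unfold hcuF at h1
      linarith
    have sv : ∀ t : ℝ, 0 ≤ t → (t : EReal) < b → ∀ j, |hcuV (y t) j| ≤ r := by
      intro t h0 hb j
      refine abs_le_of_sq_le_sq (le_trans ?_ (sV t h0 hb)) hr0.le
      exact Finset.single_le_sum (f := fun j => (hcuV (y t) j)^2) (fun j _ => sq_nonneg _)
        (Finset.mem_univ j)
    have sw : ∀ t : ℝ, 0 ≤ t → (t : EReal) < b → ∀ j, |hcuW (y t) (p t) j| ≤ σ := by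
      intro t h0 hb j
      have h1 := (main t h0 hb).1.1.2.2
      have h2 : 0 ≤ ∑ j, (hcuV (y t) j)^2 := Finset.sum_nonneg fun j _ => sq_nonneg _
      have h3 : (hcuW (y t) (p t) j)^2 ≤ ∑ j, (hcuW (y t) (p t) j)^2 :=
        Finset.single_le_sum (f := fun j => (hcuW (y t) (p t) j)^2) (fun j _ => sq_nonneg _)
        (Finset.mem_univ j)
      refine abs_le_of_sq_le_sq ?_ hσ0.le
      unfold hcuF at h1
      have h4 : A * (∑ j, (hcuW (y t) (p t) j)^2) ≤ 1 := by nlinarith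
      rw [hA, one_div_mul_eq_div, div_le_one (by positivity)] at h4
      linarith
    refine ⟨⟨B + 1 + ((m+1)/2 * B^2 + 1 + |C| + B + σ), ?_⟩, M/4, by positivity,
      64 * M / (ζ/4), by positivity, ?_⟩
    · intro t h0 hb j
      obtain ⟨⟨⟨q1, q2, q3⟩, -⟩, q4⟩ := main t h0 hb
      have hvj := sv t h0 hb j
      have hwj := sw t h0 hb j
      have hsV := sV t h0 hb
      have hsV0 : 0 ≤ ∑ j, (hcuV (y t) j)^2 := Finset.sum_nonneg fun j _ => sq_nonneg _
      have k1 : 0 ≤ ((m:ℝ)+1)/2 * B^2 := by positivity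
      have k2 := abs_nonneg C
      have e1 : y t j = hcuAv (y t) + hcuV (y t) j := by unfold hcuV; ring
      have e2 : p t j = hcuAv (p t) + hcuAv (y t) * hcuV (y t) j + hcuW (y t) (p t) j := by
        unfold hcuW; ring
      constructor
      · rw [e1]
        have := abs_add_le (hcuAv (y t)) (hcuV (y t) j)
        linarith
      · rw [e2]
        have t1 := abs_add_le (hcuAv (p t) + hcuAv (y t) * hcuV (y t) j) (hcuW (y t) (p t) j)
        have t2 := abs_add_le (hcuAv (p t)) (hcuAv (y t) * hcuV (y t) j)
        have t3 : |hcuAv (y t) * hcuV (y t) j| ≤ B * 1 := by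
          rw [abs_mul]
          exact mul_le_mul q1.le (hvj.trans hr1) (abs_nonneg _) hB0.le
        have t4 : |hcuAv (p t)| ≤ (m+1)/2 * B^2 + 1 + |C| := by
          have f1 : ((m:ℝ)+1)/2 * (hcuAv (y t))^2 ≤ (m+1)/2 * B^2 :=
            mul_le_mul_of_nonneg_left (sq_le_sq' (abs_lt.1 q1).1.le (abs_lt.1 q1).2.le)
              (by positivity)
          have f0 : 0 ≤ ((m:ℝ)+1)/2 * (hcuAv (y t))^2 := by positivity
          have f2 : (∑ j, (hcuV (y t) j)^2) / (2 * m) ≤ 1 := by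
            rw [div_le_iff₀ (by positivity)]
            have : r^2 ≤ 1 := pow_le_one₀ hr0.le hr1
            linarith
          have f3 : 0 ≤ (∑ j, (hcuV (y t) j)^2) / (2 * m) := div_nonneg hsV0 (by positivity)
          have f4 := le_abs_self C
          have f5 := neg_abs_le C
          rw [q4, abs_le]
          constructor <;> linarith
        linarith
    · intro t hT hb j
      have h0 : 0 ≤ t := le_trans (by positivity) hT
      have h1 := (main t h0 hb).1.2 hT
      have h2 := (abs_le.1 (sv t h0 hb j)).2
      have e1 : y t j = hcuAv (y t) + hcuV (y t) j := by unfold hcuV; ring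
      rw [e1]
      linarith

theorem contDiff_field : ContDiff ℝ 1
    (fun z : (Fin m → ℝ) × (Fin m → ℝ) => (z.2, hcuRhs z.1 z.2)) := by
  refine contDiff_snd.prodMk ?_
  rw [contDiff_pi]
  intro j
  have h1 : ∀ k, ContDiff ℝ 1 (fun z : (Fin m → ℝ) × (Fin m → ℝ) => z.1 k) := fun k =>
    (contDiff_apply ℝ ℝ k).comp contDiff_fst
  have h2 : ∀ k, ContDiff ℝ 1 (fun z : (Fin m → ℝ) × (Fin m → ℝ) => z.2 k) := fun k =>
    (contDiff_apply ℝ ℝ k).comp contDiff_snd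
  have hS : ContDiff ℝ 1 (fun z : (Fin m → ℝ) × (Fin m → ℝ) => ∑ k, z.1 k) :=
    ContDiff.sum fun k _ => h1 k
  have hQ : ContDiff ℝ 1 (fun z : (Fin m → ℝ) × (Fin m → ℝ) => ∑ k, (z.1 k)^2) :=
    ContDiff.sum fun k _ => (h1 k).pow 2
  unfold hcuRhs
  exact ((hS.add (h1 j)).mul (h2 j)).add (((h1 j).mul hQ).sub (((h1 j).pow 2).mul hS))

theorem extend_right (a : EReal) (β : ℝ) (ha : a < ((0:ℝ) : EReal)) (hβ : 0 < β)
    (y p : ℝ → Fin m → ℝ) (hsol : hcuSol a β y p) (R : ℝ)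
    (hR : ∀ t : ℝ, 0 ≤ t → t < β → ∀ j, |y t j| ≤ R ∧ |p t j| ≤ R) :
    ∃ b' : EReal, (β : EReal) < b' ∧ ∃ z q : ℝ → Fin m → ℝ, hcuSol a b' z q ∧
      ∀ t < β, z t = y t := by
  have hX : ∀ t : ℝ, a < (t : EReal) → t < β → HasDerivAt (fun t => (y t, p t))
      (p t, hcuRhs (y t) (p t)) t := by
    intro t h1 h2
    obtain ⟨k1, k2⟩ := hsol t h1 (EReal.coe_lt_coe_iff.2 h2)
    exact (hasDerivAt_pi.2 k1).prodMk (hasDerivAt_pi.2 k2)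
  have hN : ∀ t, 0 ≤ t → t < β → ‖(y t, p t)‖ ≤ max R 0 := by
    intro t h1 h2
    have h := hR t h1 h2
    refine norm_prod_le_iff.2 ⟨?_, ?_⟩
    · exact (pi_norm_le_iff_of_nonneg (le_max_right _ _)).2 fun j => (h j).1.trans (le_max_left _ _)
    · exact (pi_norm_le_iff_of_nonneg (le_max_right _ _)).2 fun j => (h j).2.trans (le_max_left _ _)
  obtain ⟨β', hβ', Z, hZ, hZX⟩ := ode_extend
    (fun z : (Fin m → ℝ) × (Fin m → ℝ) => (z.2, hcuRhs z.1 z.2)) contDiff_field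
    (fun t => (y t, p t)) a 0 β hβ ha hX (max R 0) hN
  refine ⟨β', EReal.coe_lt_coe_iff.2 hβ', fun t => (Z t).1, fun t => (Z t).2, ?_, ?_⟩
  · intro t h1 h2
    have h := hZ t h1 (EReal.coe_lt_coe_iff.1 h2)
    have hf : HasDerivAt (fun t => (Z t).1) (Z t).2 t :=
      ((ContinuousLinearMap.fst ℝ (Fin m → ℝ) (Fin m → ℝ)).hasFDerivAt).comp_hasDerivAt t h
    have hs : HasDerivAt (fun t => (Z t).2) (hcuRhs (Z t).1 (Z t).2) t :=
      ((ContinuousLinearMap.snd ℝ (Fin m → ℝ) (Fin m → ℝ)).hasFDerivAt).comp_hasDerivAt t h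
    exact ⟨hasDerivAt_pi.1 hf, hasDerivAt_pi.1 hs⟩
  · intro t ht
    simp [hZX t ht]

theorem sol_reverse (a b : EReal) (y p : ℝ → Fin m → ℝ) (h : hcuSol a b y p) :
    hcuSol (-b) (-a) (fun t => -y (-t)) (fun t => p (-t)) := by
  intro t h1 h2
  have h1' : ((-t : ℝ) : EReal) < b := by
    rw [EReal.coe_neg]; exact EReal.neg_lt_comm.1 h1
  have h2' : a < ((-t : ℝ) : EReal) := by
    rw [EReal.coe_neg]; exact EReal.lt_neg_comm.1 h2
  obtain ⟨k1, k2⟩ := h (-t) h2' h1'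
  constructor
  · intro j
    have := ((k1 j).scomp t (hasDerivAt_neg t)).neg
    refine this.congr_deriv ?_
    simp
  · intro j
    have := ((k2 j).scomp t (hasDerivAt_neg t))
    refine (this.congr_deriv ?_)
    simp [hcuRhs]
    ring

end HCU


/-- For `m ≥ 2`, `ξ ∈ ℝ` and `ζ > 0`, there is a neighborhood `W`
of `(ξ·𝟙, −ζ·𝟙)` such that every maximal solution of the system (hcu) with
`(y(0), y'(0)) ∈ W` is defined on all of `ℝ`, and its components eventually lie
below `−δ` for `t ≥ T` and above `δ` for `t ≤ −T`, for some `δ, T > 0`. -/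
theorem stmt_16 (m : ℕ) (hm : 2 ≤ m) (ξ ζ : ℝ) (hζ : 0 < ζ) :
    ∃ W : Set ((Fin m → ℝ) × (Fin m → ℝ)),
      W ∈ nhds (((fun _ => ξ), (fun _ => -ζ)) : (Fin m → ℝ) × (Fin m → ℝ)) ∧
      ∀ (a b : EReal) (y y' y'' : ℝ → Fin m → ℝ),
        a < (0 : ℝ) → ((0 : ℝ) : EReal) < b →
        (∀ j, ∀ t : ℝ, a < (t : EReal) → (t : EReal) < b →
          HasDerivAt (fun s => y s j) (y' t j) t) →
        (∀ j, ∀ t : ℝ, a < (t : EReal) → (t : EReal) < b →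
          HasDerivAt (fun s => y' s j) (y'' t j) t) →
        (∀ j, ∀ t : ℝ, a < (t : EReal) → (t : EReal) < b →
          y'' t j - ((∑ k, y t k) + y t j) * y' t j
            = y t j * (∑ k, (y t k) ^ 2) - (y t j) ^ 2 * (∑ k, y t k)) →
        (∀ (a' b' : EReal) (z z' z'' : ℝ → Fin m → ℝ),
          a' ≤ a → b ≤ b' →
          (∀ j, ∀ t : ℝ, a' < (t : EReal) → (t : EReal) < b' →
            HasDerivAt (fun s => z s j) (z' t j) t) →
          (∀ j, ∀ t : ℝ, a' < (t : EReal) → (t : EReal) < b' →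
            HasDerivAt (fun s => z' s j) (z'' t j) t) →
          (∀ j, ∀ t : ℝ, a' < (t : EReal) → (t : EReal) < b' →
            z'' t j - ((∑ k, z t k) + z t j) * z' t j
              = z t j * (∑ k, (z t k) ^ 2) - (z t j) ^ 2 * (∑ k, z t k)) →
          (∀ t : ℝ, a < (t : EReal) → (t : EReal) < b → z t = y t) →
          a' = a ∧ b' = b) →
        (y 0, y' 0) ∈ W →
        a = ⊥ ∧ b = ⊤ ∧
        ∃ δ > (0 : ℝ), ∃ T > (0 : ℝ),
          (∀ t : ℝ, T ≤ t → ∀ j, y t j < -δ) ∧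
          (∀ t : ℝ, t ≤ -T → ∀ j, δ < y t j) := by
  have hm0 : 0 < m := by omega
  obtain ⟨W1, hW1, P1⟩ := forward hm0 ξ ζ hζ
  obtain ⟨W2, hW2, P2⟩ := forward hm0 (-ξ) ζ hζ
  refine ⟨W1 ∩ (fun z : (Fin m → ℝ) × (Fin m → ℝ) => (-z.1, z.2)) ⁻¹' W2,
    Filter.inter_mem hW1 ?_, ?_⟩
  · have hc : Continuous (fun z : (Fin m → ℝ) × (Fin m → ℝ) => (-z.1, z.2)) := by fun_prop
    exact hc.continuousAt.preimage_mem_nhds hW2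
  intro a b y y' y'' ha hb h1 h2 h3 hmax hW
  have hsol : hcuSol a b y y' := by
    intro t k1 k2
    refine ⟨fun j => h1 j t k1 k2, fun j => (h2 j t k1 k2).congr_deriv ?_⟩
    have := h3 j t k1 k2
    unfold hcuRhs
    linarith
  have hmax' : ∀ (a' b' : EReal) (z q : ℝ → Fin m → ℝ), a' ≤ a → b ≤ b' → hcuSol a' b' z q →
      (∀ t : ℝ, a < (t : EReal) → (t : EReal) < b → z t = y t) → a' = a ∧ b' = b := by
    intro a' b' z q k1 k2 hz hzy
    refine hmax a' b' z q (fun t => hcuRhs (z t) (q t)) k1 k2 (fun j t l1 l2 => (hz t l1 l2).1 j)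
      (fun j t l1 l2 => (hz t l1 l2).2 j) ?_ hzy
    intro j t _ _
    simp only [hcuRhs]
    ring
  have hrev := sol_reverse a b y y' hsol
  have hb' : -b < ((0:ℝ) : EReal) := by
    rw [EReal.neg_lt_comm]; simpa using hb
  have ha' : ((0:ℝ) : EReal) < -a := by
    rw [EReal.lt_neg_comm]; simpa using ha
  obtain ⟨⟨R1, hR1⟩, δ1, hδ1, T1, hT1, D1⟩ := P1 a b y y' ha hsol hW.1
  obtain ⟨⟨R2, hR2⟩, δ2, hδ2, T2, hT2, D2⟩ := P2 (-b) (-a) _ _ hb' hrev (by simpa using hW.2)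
  have hbtop : b = ⊤ := by
    by_contra hne
    lift b to ℝ using ⟨hne, (bot_le.trans_lt hb).ne'⟩
    obtain ⟨b', hbb', z, q, hz, hzy⟩ := extend_right a b ha (EReal.coe_lt_coe_iff.1 hb) y y' hsol R1
      (fun t k1 k2 => hR1 t k1 (EReal.coe_lt_coe_iff.2 k2))
    exact hbb'.ne' (hmax' a b' z q le_rfl hbb'.le hz
      (fun t _ k => hzy t (EReal.coe_lt_coe_iff.1 k))).2
  have habot : a = ⊥ := by
    by_contra hne
    lift a to ℝ using ⟨(ha.trans_le le_top).ne, hne⟩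
    rw [← EReal.coe_neg] at hrev hR2 ha'
    obtain ⟨b', hbb', z, q, hz, hzy⟩ := extend_right (-b) (-a) hb' (EReal.coe_lt_coe_iff.1 ha') _ _
      hrev R2 (fun t k1 k2 => hR2 t k1 (EReal.coe_lt_coe_iff.2 k2))
    have hz' := sol_reverse _ _ z q hz
    rw [neg_neg] at hz'
    have hlt : -b' < (a : EReal) := by
      rw [EReal.neg_lt_comm]; simpa using hbb'
    refine hlt.ne (hmax' (-b') b _ _ hlt.le le_rfl hz' ?_).1
    intro t k1 _
    have := hzy (-t) (by linarith [EReal.coe_lt_coe_iff.1 k1])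
    simp [this]
  subst hbtop habot
  refine ⟨rfl, rfl, min δ1 δ2, lt_min hδ1 hδ2, max T1 T2, lt_max_of_lt_left hT1, ?_, ?_⟩
  · intro t ht j
    have := D1 t ((le_max_left _ _).trans ht) (EReal.coe_lt_top t) j
    linarith [min_le_left δ1 δ2]
  · intro t ht j
    have := D2 (-t) (by linarith [le_max_right T1 T2]) (by rw [EReal.neg_bot]; exact EReal.coe_lt_top _) j
    simp at this
    linarith [min_le_right δ1 δ2]
end
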